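/- arXiv:2110.00290 — 4 statements merged into one kernel-verified Lean document; each statement's English description precedes it below -/
import Mathlib

section
/- Block-matrix positivity implies the per-step quadratic dissipation inequality (Schur complement consequence): Let P ∈ ℝ^{n×n} be symmetric positive definite, γ > 0, and A ∈ ℝ^{n×n}, B ∈ ℝ^{n×m}, C ∈ ℝ^{p×n}, D ∈ ℝ^{p×m}. If the symmetric block matrix M = [[P, A P, B, 0], [P Aᵀ, P, 0, P Cᵀ], [Bᵀ, 0, γ I_m, Dᵀ], [0, C P, D, γ I_p]] is positive definite, then for all δx ∈ ℝ^n and δw ∈ ℝ^m, writing δx⁺ = A δx + B δw and δz = C δx + D δw, one has (δx⁺)ᵀ P⁻¹ δx⁺ − δxᵀ P⁻¹ δx ≤ γ ‖δw‖² − γ⁻¹ ‖δz‖², with strict inequality whenever (δx, δw) ≠ (0, 0). -/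
open Matrix

/-- Block-matrix positivity implies the per-step quadratic
dissipation inequality (Schur complement consequence).  If the symmetric block
matrix `M = [[P, AP, B, 0], [PAᵀ, P, 0, PCᵀ], [Bᵀ, 0, γI, Dᵀ], [0, CP, D, γI]]`
is positive definite (with `P` symmetric positive definite and `γ > 0`), then
for all `δx, δw`, writing `δx⁺ = A δx + B δw` and `δz = C δx + D δw`,
`(δx⁺)ᵀ P⁻¹ δx⁺ − δxᵀ P⁻¹ δx ≤ γ ‖δw‖² − γ⁻¹ ‖δz‖²`, strictly whenever
`(δx, δw) ≠ (0, 0)`. -/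
theorem block_lmi_implies_step_dissipation
    (n m p : ℕ)
    (P : Matrix (Fin n) (Fin n) ℝ) (hP : P.PosDef)
    (γ : ℝ) (hγ : 0 < γ)
    (A : Matrix (Fin n) (Fin n) ℝ) (B : Matrix (Fin n) (Fin m) ℝ)
    (C : Matrix (Fin p) (Fin n) ℝ) (D : Matrix (Fin p) (Fin m) ℝ)
    (hM : (Matrix.fromBlocks
        (Matrix.fromBlocks P (A * P) (P * Aᵀ) P)
        (Matrix.fromBlocks B 0 0 (P * Cᵀ))
        (Matrix.fromBlocks Bᵀ 0 0 (C * P))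
        (Matrix.fromBlocks (γ • (1 : Matrix (Fin m) (Fin m) ℝ)) Dᵀ
          D (γ • (1 : Matrix (Fin p) (Fin p) ℝ)))).PosDef) :
    ∀ δx : Fin n → ℝ, ∀ δw : Fin m → ℝ,
      ((A.mulVec δx + B.mulVec δw) ⬝ᵥ P⁻¹.mulVec (A.mulVec δx + B.mulVec δw)
          - δx ⬝ᵥ P⁻¹.mulVec δx ≤
        γ * (δw ⬝ᵥ δw)
          - γ⁻¹ * ((C.mulVec δx + D.mulVec δw) ⬝ᵥ (C.mulVec δx + D.mulVec δw))) ∧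
      ((δx, δw) ≠ (0, 0) →
        (A.mulVec δx + B.mulVec δw) ⬝ᵥ P⁻¹.mulVec (A.mulVec δx + B.mulVec δw)
            - δx ⬝ᵥ P⁻¹.mulVec δx <
          γ * (δw ⬝ᵥ δw)
            - γ⁻¹ * ((C.mulVec δx + D.mulVec δw) ⬝ᵥ (C.mulVec δx + D.mulVec δw))) := by
  have hdet : IsUnit P.det := hP.det_pos.ne'.isUnit
  have hPT : Pᵀ = P := by
    have := hP.isHermitian
    simpa [Matrix.IsHermitian, Matrix.conjTranspose_eq_transpose_of_trivial] using this
  have key : ∀ δx : Fin n → ℝ, ∀ δw : Fin m → ℝ, (δx, δw) ≠ (0, 0) →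
        (A.mulVec δx + B.mulVec δw) ⬝ᵥ P⁻¹.mulVec (A.mulVec δx + B.mulVec δw)
            - δx ⬝ᵥ P⁻¹.mulVec δx <
          γ * (δw ⬝ᵥ δw)
            - γ⁻¹ * ((C.mulVec δx + D.mulVec δw) ⬝ᵥ (C.mulVec δx + D.mulVec δw)) := by
    intro x w hne
    obtain ⟨b, hb⟩ : ∃ b, b = P⁻¹ *ᵥ x := ⟨_, rfl⟩
    obtain ⟨y, hy⟩ : ∃ y, y = A *ᵥ x + B *ᵥ w := ⟨_, rfl⟩
    obtain ⟨z, hz⟩ : ∃ z, z = C *ᵥ x + D *ᵥ w := ⟨_, rfl⟩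
    obtain ⟨a, ha⟩ : ∃ a, a = P⁻¹ *ᵥ y := ⟨_, rfl⟩
    have hPb : P *ᵥ b = x := by
      rw [hb, Matrix.mulVec_mulVec, Matrix.mul_nonsing_inv _ hdet, Matrix.one_mulVec]
    have hPa : P *ᵥ a = y := by
      rw [ha, Matrix.mulVec_mulVec, Matrix.mul_nonsing_inv _ hdet, Matrix.one_mulVec]
    rw [← hy, ← hz, ← hb, ← ha]
    have hv : (Sum.elim (Sum.elim (-a) b) (Sum.elim w (-(γ⁻¹ • z)))) ≠ 0 := by
      intro h0
      apply hne
      have h1 : b = 0 := by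
        ext i
        exact congrFun h0 (Sum.inl (Sum.inr i))
      have h2 : w = 0 := by
        ext i
        exact congrFun h0 (Sum.inr (Sum.inl i))
      rw [← hPb, h1, h2, Matrix.mulVec_zero]
    have h := hM.dotProduct_mulVec_pos hv
    have hbP : ∀ u, b ⬝ᵥ P *ᵥ u = x ⬝ᵥ u := by
      intro u
      rw [Matrix.dotProduct_mulVec, ← Matrix.mulVec_transpose, hPT, hPb]
    have r1 : P *ᵥ (-a) + (A * P) *ᵥ b + (B *ᵥ w + (0 : Matrix (Fin n) (Fin p) ℝ) *ᵥ (-(γ⁻¹ • z))) = 0 := by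
      rw [← Matrix.mulVec_mulVec, hPb, Matrix.mulVec_neg, hPa, Matrix.zero_mulVec, hy]
      abel
    have r4 : (0 : Matrix (Fin p) (Fin n) ℝ) *ᵥ (-a) + (C * P) *ᵥ b + (D *ᵥ w + (γ • (1 : Matrix (Fin p) (Fin p) ℝ)) *ᵥ (-(γ⁻¹ • z))) = 0 := by
      rw [← Matrix.mulVec_mulVec, hPb, Matrix.zero_mulVec, Matrix.smul_mulVec, Matrix.one_mulVec,
        smul_neg, smul_smul, mul_inv_cancel₀ hγ.ne', one_smul, hz]
      abel
    have e1 : y ⬝ᵥ a = x ⬝ᵥ Aᵀ *ᵥ a + w ⬝ᵥ Bᵀ *ᵥ a := by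
      rw [hy, add_dotProduct, Matrix.dotProduct_mulVec, Matrix.dotProduct_mulVec,
        Matrix.vecMul_transpose, Matrix.vecMul_transpose]
    have e2 : z ⬝ᵥ z = x ⬝ᵥ Cᵀ *ᵥ z + w ⬝ᵥ Dᵀ *ᵥ z := by
      conv_lhs => rw [hz, add_dotProduct, ← hz]
      rw [Matrix.dotProduct_mulVec, Matrix.dotProduct_mulVec,
        Matrix.vecMul_transpose, Matrix.vecMul_transpose]
    have key2 : (-a) ⬝ᵥ (P *ᵥ (-a) + (A * P) *ᵥ b + (B *ᵥ w + (0 : Matrix (Fin n) (Fin p) ℝ) *ᵥ (-(γ⁻¹ • z))))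
       + b ⬝ᵥ ((P * Aᵀ) *ᵥ (-a) + P *ᵥ b + ((0 : Matrix (Fin n) (Fin m) ℝ) *ᵥ w + (P * Cᵀ) *ᵥ (-(γ⁻¹ • z))))
       + (w ⬝ᵥ (Bᵀ *ᵥ (-a) + (0 : Matrix (Fin m) (Fin n) ℝ) *ᵥ b + ((γ • (1 : Matrix (Fin m) (Fin m) ℝ)) *ᵥ w + Dᵀ *ᵥ (-(γ⁻¹ • z))))
       + (-(γ⁻¹ • z)) ⬝ᵥ ((0 : Matrix (Fin p) (Fin n) ℝ) *ᵥ (-a) + (C * P) *ᵥ b + (D *ᵥ w + (γ • (1 : Matrix (Fin p) (Fin p) ℝ)) *ᵥ (-(γ⁻¹ • z))))) > 0 := by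
      refine lt_of_lt_of_eq h ?_
      simp only [star_trivial, Matrix.fromBlocks_mulVec, Sum.elim_comp_inl, Sum.elim_comp_inr,
        sumElim_dotProduct_sumElim, ← Sum.elim_add_add]
    rw [r1, r4] at key2
    simp only [← Matrix.mulVec_mulVec, dotProduct_add, hbP, dotProduct_zero, Matrix.mulVec_neg,
      Matrix.mulVec_smul, dotProduct_neg, dotProduct_smul, Matrix.zero_mulVec, Matrix.smul_mulVec,
      Matrix.one_mulVec, smul_eq_mul] at key2
    rw [e1, e2]
    linarith
  intro x w
  refine ⟨?_, key x w⟩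
  by_cases h : (x, w) = (0, 0)
  · obtain ⟨rfl, rfl⟩ := Prod.mk.inj h
    simp
  · exact (key x w h).le
end

section
/- Incremental per-step dissipation from pointwise differential dissipation: Let X ⊆ ℝ^n and W ⊆ ℝ^m be open convex sets, and let f : X × W → X and h : X × W → ℝ^p be C¹. Let Q ∈ ℝ^{n×n} be symmetric positive definite and γ > 0, and suppose that for all (x, w) ∈ X × W and all δx ∈ ℝ^n, δw ∈ ℝ^m, the differential dissipation inequality holds: ((∂f/∂x)(x,w) δx + (∂f/∂w)(x,w) δw)ᵀ Q ((∂f/∂x)(x,w) δx + (∂f/∂w)(x,w) δw) − δxᵀ Q δx ≤ γ ‖δw‖² − γ⁻¹ ‖(∂h/∂x)(x,w) δx + (∂h/∂w)(x,w) δw‖². Let (x, w, z) and (x*, w*, z*) be two trajectories of x_{k+1} = f(x_k, w_k), z_k = h(x_k, w_k) with x₀, x₀* ∈ X and w_k, w*_k ∈ W for all k. Define the straight-line homotopy w̄_k(λ) = w*_k + λ(w_k − w*_k), x̄₀(λ) = x₀* + λ(x₀ − x₀*), x̄_{k+1}(λ) = f(x̄_k(λ), w̄_k(λ)), let δx_k(λ)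 = ∂x̄_k(λ)/∂λ, and set E_k = ∫₀¹ δx_k(λ)ᵀ Q δx_k(λ) dλ. Then for all k ∈ ℕ: E_{k+1} − E_k ≤ γ ‖w_k − w*_k‖² − γ⁻¹ ‖z_k − z*_k‖². -/
open Matrix Set

/-- Incremental per-step dissipation from pointwise differential
dissipation.  If the differential dynamics satisfy a pointwise quadratic
dissipation inequality with storage matrix `Q` and gain `γ` at every
`(x, w) ∈ X × W`, then along the straight-line homotopy between any two
trajectories the path energy `Eₖ = ∫₀¹ δxₖ(λ)ᵀ Q δxₖ(λ) dλ` satisfies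
`E_{k+1} − Eₖ ≤ γ ‖wₖ − w*ₖ‖² − γ⁻¹ ‖zₖ − z*ₖ‖²`. -/
theorem incremental_step_dissipation
    (n m p : ℕ)
    (X : Set (Fin n → ℝ)) (W : Set (Fin m → ℝ))
    (hXopen : IsOpen X) (hXconv : Convex ℝ X)
    (hWopen : IsOpen W) (hWconv : Convex ℝ W)
    (f : (Fin n → ℝ) × (Fin m → ℝ) → (Fin n → ℝ))
    (h : (Fin n → ℝ) × (Fin m → ℝ) → (Fin p → ℝ))
    (hf : ContDiffOn ℝ 1 f (X ×ˢ W)) (hh : ContDiffOn ℝ 1 h (X ×ˢ W))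
    (hfmaps : ∀ x ∈ X, ∀ w ∈ W, f (x, w) ∈ X)
    (Q : Matrix (Fin n) (Fin n) ℝ) (hQ : Q.PosDef)
    (γ : ℝ) (hγ : 0 < γ)
    -- pointwise differential dissipation inequality
    (hdiss : ∀ x ∈ X, ∀ w ∈ W, ∀ δx : Fin n → ℝ, ∀ δw : Fin m → ℝ,
      (fderiv ℝ f (x, w) (δx, 0) + fderiv ℝ f (x, w) (0, δw)) ⬝ᵥ
          Q.mulVec (fderiv ℝ f (x, w) (δx, 0) + fderiv ℝ f (x, w) (0, δw))
        - δx ⬝ᵥ Q.mulVec δx ≤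
      γ * (δw ⬝ᵥ δw)
        - γ⁻¹ * ((fderiv ℝ h (x, w) (δx, 0) + fderiv ℝ h (x, w) (0, δw)) ⬝ᵥ
            (fderiv ℝ h (x, w) (δx, 0) + fderiv ℝ h (x, w) (0, δw))))
    -- the two trajectories
    (x xs : ℕ → Fin n → ℝ) (w ws : ℕ → Fin m → ℝ) (z zs : ℕ → Fin p → ℝ)
    (hx0 : x 0 ∈ X) (hxs0 : xs 0 ∈ X)
    (hw : ∀ k, w k ∈ W) (hws : ∀ k, ws k ∈ W)
    (hxS : ∀ k, x (k + 1) = f (x k, w k)) (hz : ∀ k, z k = h (x k, w k))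
    (hxsS : ∀ k, xs (k + 1) = f (xs k, ws k)) (hzs : ∀ k, zs k = h (xs k, ws k))
    -- the straight-line homotopy
    (wbar : ℕ → ℝ → Fin m → ℝ)
    (hwbar : ∀ k t, wbar k t = ws k + t • (w k - ws k))
    (xbar : ℕ → ℝ → Fin n → ℝ)
    (hxbar0 : ∀ t, xbar 0 t = xs 0 + t • (x 0 - xs 0))
    (hxbarS : ∀ k t, xbar (k + 1) t = f (xbar k t, wbar k t))
    -- δxₖ(λ) = ∂x̄ₖ(λ)/∂λ
    (δx : ℕ → ℝ → Fin n → ℝ)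
    (hδx : ∀ k, ∀ t ∈ Set.Icc (0 : ℝ) 1, HasDerivAt (xbar k) (δx k t) t) :
    -- conclusion:  E_{k+1} − Eₖ ≤ γ ‖wₖ − w*ₖ‖² − γ⁻¹ ‖zₖ − z*ₖ‖²
    ∀ k : ℕ,
      (∫ t in (0 : ℝ)..1, δx (k + 1) t ⬝ᵥ Q.mulVec (δx (k + 1) t))
        - (∫ t in (0 : ℝ)..1, δx k t ⬝ᵥ Q.mulVec (δx k t)) ≤
      γ * ((w k - ws k) ⬝ᵥ (w k - ws k))
        - γ⁻¹ * ((z k - zs k) ⬝ᵥ (z k - zs k)) := by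
  have hO : IsOpen (X ×ˢ W) := hXopen.prod hWopen
  have hwmem : ∀ k, ∀ t ∈ Set.Icc (0:ℝ) 1, wbar k t ∈ W := by
    intro k t ht
    rw [hwbar]
    exact hWconv.add_smul_sub_mem (hws k) (hw k) ht
  have hxmem : ∀ k, ∀ t ∈ Set.Icc (0:ℝ) 1, xbar k t ∈ X := by
    intro k
    induction k with
    | zero =>
      intro t ht
      rw [hxbar0]
      exact hXconv.add_smul_sub_mem hxs0 hx0 ht
    | succ k ih =>
      intro t ht
      rw [hxbarS]
      exact hfmaps _ (ih t ht) _ (hwmem k t ht)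
  have hw0 : ∀ k, wbar k 0 = ws k := by intro k; simp [hwbar]
  have hw1 : ∀ k, wbar k 1 = w k := by intro k; simp [hwbar]
  have hb0 : ∀ k, xbar k 0 = xs k := by
    intro k
    induction k with
    | zero => simp [hxbar0]
    | succ k ih => rw [hxbarS, ih, hw0, hxsS]
  have hb1 : ∀ k, xbar k 1 = x k := by
    intro k
    induction k with
    | zero => simp [hxbar0]
    | succ k ih => rw [hxbarS, ih, hw1, hxS]
  have hwd : ∀ k t, HasDerivAt (wbar k) (w k - ws k) t := by
    intro k t
    have h1 : wbar k = fun t => ws k + t • (w k - ws k) := funext (hwbar k)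
    rw [h1]
    simpa using ((hasDerivAt_id t).smul_const (w k - ws k)).const_add (ws k)
  have hpd : ∀ k, ∀ t ∈ Set.Icc (0:ℝ) 1,
      HasDerivAt (fun t => (xbar k t, wbar k t)) (δx k t, w k - ws k) t :=
    fun k t ht => (hδx k t ht).prodMk (hwd k t)
  have hpc : ∀ k, ContinuousOn (fun t => (xbar k t, wbar k t)) (Set.Icc (0:ℝ) 1) :=
    fun k t ht => (hpd k t ht).continuousAt.continuousWithinAt
  have hpm : ∀ k, Set.MapsTo (fun t => (xbar k t, wbar k t)) (Set.Icc (0:ℝ) 1) (X ×ˢ W) :=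
    fun k t ht => ⟨hxmem k t ht, hwmem k t ht⟩
  have hfd : ∀ q ∈ X ×ˢ W, HasFDerivAt f (fderiv ℝ f q) q := fun q hq =>
    ((hf.differentiableOn (by norm_num)).differentiableAt (hO.mem_nhds hq)).hasFDerivAt
  have hhd : ∀ q ∈ X ×ˢ W, HasFDerivAt h (fderiv ℝ h q) q := fun q hq =>
    ((hh.differentiableOn (by norm_num)).differentiableAt (hO.mem_nhds hq)).hasFDerivAt
  have hfc : ContinuousOn (fderiv ℝ f) (X ×ˢ W) :=
    hf.continuousOn_fderiv_of_isOpen hO le_rfl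
  have hhc : ContinuousOn (fderiv ℝ h) (X ×ˢ W) :=
    hh.continuousOn_fderiv_of_isOpen hO le_rfl
  have hδS : ∀ k, ∀ t ∈ Set.Icc (0:ℝ) 1,
      δx (k+1) t = fderiv ℝ f (xbar k t, wbar k t) (δx k t, w k - ws k) := by
    intro k t ht
    have h1 := (hfd _ (hpm k ht)).comp_hasDerivAt t (hpd k t ht)
    have h2 : xbar (k+1) = f ∘ (fun t => (xbar k t, wbar k t)) := funext (hxbarS k)
    have h3 := hδx (k+1) t ht
    rw [h2] at h3
    exact h3.unique h1
  have hδc : ∀ k, ContinuousOn (δx k) (Set.Icc (0:ℝ) 1) := by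
    intro k
    induction k with
    | zero =>
      refine (continuousOn_const (c := x 0 - xs 0)).congr ?_
      intro t ht
      have h1 : xbar 0 = fun t => xs 0 + t • (x 0 - xs 0) := funext hxbar0
      have h3 := hδx 0 t ht
      rw [h1] at h3
      refine h3.unique ?_
      simpa using ((hasDerivAt_id t).smul_const (x 0 - xs 0)).const_add (xs 0)
    | succ k ih =>
      refine ContinuousOn.congr ?_ (hδS k)
      exact (hfc.comp (hpc k) (hpm k)).clm_apply (ih.prodMk continuousOn_const)
  have hEc : ∀ k, ContinuousOn (fun t => δx k t ⬝ᵥ Q.mulVec (δx k t)) (Set.Icc (0:ℝ) 1) := by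
    intro k
    have hg : Continuous (fun v : Fin n → ℝ => v ⬝ᵥ Q.mulVec v) := by fun_prop
    exact hg.comp_continuousOn (hδc k)
  have hEi : ∀ k, IntervalIntegrable (fun t => δx k t ⬝ᵥ Q.mulVec (δx k t))
      MeasureTheory.volume 0 1 := fun k =>
    ContinuousOn.intervalIntegrable (by rw [Set.uIcc_of_le zero_le_one]; exact hEc k)
  intro k
  set c := z k - zs k with hc
  set d := w k - ws k with hd
  set ζ : ℝ → Fin p → ℝ := fun t => fderiv ℝ h (xbar k t, wbar k t) (δx k t, d) with hζ
  have hζc : ContinuousOn ζ (Set.Icc (0:ℝ) 1) :=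
    (hhc.comp (hpc k) (hpm k)).clm_apply ((hδc k).prodMk continuousOn_const)
  have hcζc : ContinuousOn (fun t => c ⬝ᵥ ζ t) (Set.Icc (0:ℝ) 1) := by
    have hg : Continuous (fun v : Fin p → ℝ => c ⬝ᵥ v) := by fun_prop
    exact hg.comp_continuousOn hζc
  have hcζi : IntervalIntegrable (fun t => c ⬝ᵥ ζ t) MeasureTheory.volume 0 1 :=
    ContinuousOn.intervalIntegrable (by rw [Set.uIcc_of_le zero_le_one]; exact hcζc)
  have hint : ∫ t in (0:ℝ)..1, c ⬝ᵥ ζ t = c ⬝ᵥ c := by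
    have h1 : ∀ t ∈ Set.uIcc (0:ℝ) 1,
        HasDerivAt (fun t => c ⬝ᵥ h (xbar k t, wbar k t)) (c ⬝ᵥ ζ t) t := by
      intro t ht
      rw [Set.uIcc_of_le zero_le_one] at ht
      have h2 := (hhd _ (hpm k ht)).comp_hasDerivAt t (hpd k t ht)
      rw [hasDerivAt_pi] at h2
      simp only [dotProduct]
      exact HasDerivAt.fun_sum fun i _ => (h2 i).const_mul (c i)
    rw [intervalIntegral.integral_eq_sub_of_hasDerivAt h1 hcζi]
    simp only [hb0, hb1, hw0, hw1, ← hz, ← hzs]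
    rw [← dotProduct_sub]
  have hpt : ∀ t ∈ Set.Icc (0:ℝ) 1,
      δx (k + 1) t ⬝ᵥ Q.mulVec (δx (k + 1) t) - δx k t ⬝ᵥ Q.mulVec (δx k t) ≤
      (γ * (d ⬝ᵥ d) + γ⁻¹ * (c ⬝ᵥ c)) - (2 * γ⁻¹) * (c ⬝ᵥ ζ t) := by
    intro t ht
    have h1 := hdiss _ (hxmem k t ht) _ (hwmem k t ht) (δx k t) d
    rw [← map_add, ← map_add, Prod.mk_add_mk, add_zero, zero_add, ← hδS k t ht] at h1
    have h2 : 0 ≤ (ζ t - c) ⬝ᵥ (ζ t - c) :=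
      Finset.sum_nonneg fun i _ => mul_self_nonneg _
    rw [sub_dotProduct, dotProduct_sub (ζ t) (ζ t) c, dotProduct_sub c (ζ t) c,
      dotProduct_comm (ζ t) c] at h2
    have h3 := mul_nonneg (inv_pos.mpr hγ).le h2
    change _ ≤ γ * (d ⬝ᵥ d) - γ⁻¹ * (ζ t ⬝ᵥ ζ t) at h1
    linarith
  rw [← intervalIntegral.integral_sub (hEi (k+1)) (hEi k)]
  have hfin := intervalIntegral.integral_mono_on zero_le_one ((hEi (k+1)).sub (hEi k))
    (intervalIntegrable_const.sub (hcζi.const_mul (2 * γ⁻¹))) hpt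
  refine hfin.trans (le_of_eq ?_)
  rw [intervalIntegral.integral_sub intervalIntegrable_const (hcζi.const_mul (2 * γ⁻¹)),
    intervalIntegral.integral_const_mul, hint, intervalIntegral.integral_const]
  simp only [sub_zero, one_smul]
  ring
end

section
/- Theorem 1 (ℓ_{i2}-gain analysis): Let X ⊆ ℝ^n and W ⊆ ℝ^m be open convex sets, and let f : X × W → X and h : X × W → ℝ^p be C¹. Suppose there exist a symmetric positive definite P ∈ ℝ^{n×n} and γ > 0 such that for all (x, w) ∈ X × W the block matrix [[P, A_δ(x,w) P, B_δ(x,w), 0], [P A_δ(x,w)ᵀ, P, 0, P C_δ(x,w)ᵀ], [B_δ(x,w)ᵀ, 0, γ I_m, D_δ(x,w)ᵀ], [0, C_δ(x,w) P, D_δ(x,w), γ I_p]] is positive definite, where A_δ = ∂f/∂x, B_δ = ∂f/∂w, C_δ = ∂h/∂x, D_δ = ∂h/∂w. Then the system x_{k+1} = f(x_k, w_k), z_k = h(x_k, w_k) has incremental ℓ₂-gain bounded by γ: for any two trajectories (x, w, z) and (x*, w*, z*) with x₀, x₀* ∈ X, w_k, w*_k ∈ W for all k, and w − w* square-summable, the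 sequence z − z* is square-summable and ‖z − z*‖₂ ≤ γ ‖w − w*‖₂ + ζ(x₀, x₀*), where ζ(a, b) = sqrt(γ (a − b)ᵀ P⁻¹ (a − b)); in particular ζ ≥ 0 and ζ(a, a) = 0. -/
open Matrix Set

lemma jac_apply {n m q : ℕ} (L : ((Fin n → ℝ) × (Fin m → ℝ)) →L[ℝ] (Fin q → ℝ))
    (d : Fin n → ℝ) (e : Fin m → ℝ) :
    (Matrix.of fun i j => L (Pi.single j 1, 0) i) *ᵥ d
      + (Matrix.of fun i j => L (0, Pi.single j 1) i) *ᵥ e = L (d, e) := by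
  have h1 : (Matrix.of fun i j => L (Pi.single j 1, 0) i) =
      LinearMap.toMatrix' (L.toLinearMap ∘ₗ LinearMap.inl ℝ (Fin n → ℝ) (Fin m → ℝ)) := by
    ext i j
    simp [LinearMap.toMatrix'_apply]
  have h2 : (Matrix.of fun i j => L (0, Pi.single j 1) i) =
      LinearMap.toMatrix' (L.toLinearMap ∘ₗ LinearMap.inr ℝ (Fin n → ℝ) (Fin m → ℝ)) := by
    ext i j
    simp [LinearMap.toMatrix'_apply]
  rw [h1, h2, LinearMap.toMatrix'_mulVec, LinearMap.toMatrix'_mulVec]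
  simp only [LinearMap.comp_apply, LinearMap.inl_apply, LinearMap.inr_apply,
    ContinuousLinearMap.coe_coe, ← map_add]
  simp

lemma quad_form {n m p : ℕ} (P A : Matrix (Fin n) (Fin n) ℝ) (B : Matrix (Fin n) (Fin m) ℝ)
    (C : Matrix (Fin p) (Fin n) ℝ) (D : Matrix (Fin p) (Fin m) ℝ) (γ : ℝ) (hP : P.PosDef)
    (hM : (Matrix.fromBlocks
        (Matrix.fromBlocks P (A * P) (P * Aᵀ) P)
        (Matrix.fromBlocks B 0 0 (P * Cᵀ))
        (Matrix.fromBlocks Bᵀ 0 0 (C * P))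
        (Matrix.fromBlocks (γ • (1 : Matrix (Fin m) (Fin m) ℝ)) Dᵀ
          D (γ • (1 : Matrix (Fin p) (Fin p) ℝ)))).PosDef)
    (u d : Fin n → ℝ) (e : Fin m → ℝ) (v : Fin p → ℝ) :
    2 * (u ⬝ᵥ (A *ᵥ d + B *ᵥ e) + v ⬝ᵥ (C *ᵥ d + D *ᵥ e)) ≤
      u ⬝ᵥ P *ᵥ u + d ⬝ᵥ P⁻¹ *ᵥ d + γ * (e ⬝ᵥ e) + γ * (v ⬝ᵥ v) := by
  have hPt : Pᵀ = P := by simpa using hP.isHermitian.eq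
  have hdet : IsUnit P.det := hP.det_pos.ne'.isUnit
  set s : Fin n → ℝ := P⁻¹ *ᵥ d with hs
  have hPs : P *ᵥ s = d := by
    rw [hs, Matrix.mulVec_mulVec, Matrix.mul_nonsing_inv _ hdet, Matrix.one_mulVec]
  have h0 := hM.posSemidef.dotProduct_mulVec_nonneg
    (Sum.elim (Sum.elim (-u) s) (Sum.elim e (-v)))
  have hsP : ∀ y : Fin n → ℝ, s ⬝ᵥ P *ᵥ y = d ⬝ᵥ y := by
    intro y
    rw [Matrix.dotProduct_mulVec, ← Matrix.mulVec_transpose, hPt, hPs]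
  have hT : ∀ {a b : ℕ} (M : Matrix (Fin a) (Fin b) ℝ) (y : Fin b → ℝ) (t : Fin a → ℝ),
      y ⬝ᵥ Mᵀ *ᵥ t = t ⬝ᵥ M *ᵥ y := by
    intro a b M y t
    rw [Matrix.dotProduct_mulVec, Matrix.vecMul_transpose, dotProduct_comm]
  simp only [star_trivial, Matrix.fromBlocks_mulVec, Sum.elim_comp_inl, Sum.elim_comp_inr,
    sumElim_dotProduct_sumElim, Matrix.mulVec_neg,
    ← Matrix.mulVec_mulVec, hPs, Matrix.zero_mulVec, Matrix.smul_mulVec, Matrix.one_mulVec,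
    dotProduct_add, dotProduct_neg, neg_dotProduct, dotProduct_zero, hsP, hT, dotProduct_smul,
    smul_eq_mul] at h0
  simp only [dotProduct_add]
  have hds : s ⬝ᵥ d = d ⬝ᵥ s := dotProduct_comm _ _
  linarith

lemma one_step {n m p : ℕ}
    (X : Set (Fin n → ℝ)) (W : Set (Fin m → ℝ))
    (hXopen : IsOpen X) (hXconv : Convex ℝ X)
    (hWopen : IsOpen W) (hWconv : Convex ℝ W)
    (f : (Fin n → ℝ) × (Fin m → ℝ) → (Fin n → ℝ))
    (h : (Fin n → ℝ) × (Fin m → ℝ) → (Fin p → ℝ))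
    (hf : ContDiffOn ℝ 1 f (X ×ˢ W)) (hh : ContDiffOn ℝ 1 h (X ×ˢ W))
    (x xs : Fin n → ℝ) (w ws : Fin m → ℝ) (hx : x ∈ X) (hxs : xs ∈ X) (hw : w ∈ W)
    (hws : ws ∈ W) (u : Fin n → ℝ) (v : Fin p → ℝ) :
    ∃ y ∈ X, ∃ r ∈ W, u ⬝ᵥ (f (x, w) - f (xs, ws)) + v ⬝ᵥ (h (x, w) - h (xs, ws)) =
      u ⬝ᵥ (fderiv ℝ f (y, r) (x - xs, w - ws)) + v ⬝ᵥ (fderiv ℝ h (y, r) (x - xs, w - ws)) := by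
  have hconv : Convex ℝ (X ×ˢ W) := hXconv.prod hWconv
  have hopen : IsOpen (X ×ˢ W) := hXopen.prod hWopen
  let c : ℝ → (Fin n → ℝ) × (Fin m → ℝ) := fun t => (xs, ws) + t • ((x, w) - (xs, ws))
  have hc : ∀ t ∈ Set.Icc (0:ℝ) 1, c t ∈ X ×ˢ W := fun t ht =>
    hconv.add_smul_sub_mem (x := (xs, ws)) (y := (x, w)) ⟨hxs, hws⟩ ⟨hx, hw⟩ ht
  have hcd : ∀ t, HasDerivAt c ((x, w) - (xs, ws)) t := by
    intro t
    have := ((hasDerivAt_id t).smul_const ((x, w) - (xs, ws))).const_add (xs, ws)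
    rw [one_smul] at this
    exact this
  have hfd : ∀ q ∈ X ×ˢ W, HasFDerivAt f (fderiv ℝ f q) q := fun q hq =>
    ((hf.contDiffAt (hopen.mem_nhds hq)).differentiableAt (by norm_num)).hasFDerivAt
  have hhd : ∀ q ∈ X ×ˢ W, HasFDerivAt h (fderiv ℝ h q) q := fun q hq =>
    ((hh.contDiffAt (hopen.mem_nhds hq)).differentiableAt (by norm_num)).hasFDerivAt
  have hdot : ∀ {a : ℕ} (u g' : Fin a → ℝ) (g : ℝ → Fin a → ℝ) (t : ℝ), HasDerivAt g g' t →
      HasDerivAt (fun t => u ⬝ᵥ g t) (u ⬝ᵥ g') t := by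
    intro a u g' g t hg
    have hg' := hasDerivAt_pi.1 hg
    simp only [dotProduct]
    exact HasDerivAt.fun_sum fun i _ => (hg' i).const_mul (u i)
  have key : ∀ t ∈ Set.Icc (0:ℝ) 1, HasDerivAt (fun t => u ⬝ᵥ f (c t) + v ⬝ᵥ h (c t))
      (u ⬝ᵥ (fderiv ℝ f (c t) ((x, w) - (xs, ws)))
        + v ⬝ᵥ (fderiv ℝ h (c t) ((x, w) - (xs, ws)))) t := by
    intro t ht
    exact (hdot u _ _ t ((hfd _ (hc t ht)).comp_hasDerivAt t (hcd t))).add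
      (hdot v _ _ t ((hhd _ (hc t ht)).comp_hasDerivAt t (hcd t)))
  obtain ⟨t, ht, he⟩ := exists_hasDerivAt_eq_slope _ _ (zero_lt_one' ℝ)
    (fun t ht => (key t ht).continuousAt.continuousWithinAt)
    (fun t ht => key t (Set.Ioo_subset_Icc_self ht))
  have hmem := hc t (Set.Ioo_subset_Icc_self ht)
  refine ⟨(c t).1, hmem.1, (c t).2, hmem.2, ?_⟩
  have c0 : c 0 = (xs, ws) := by simp [c]
  have c1 : c 1 = (x, w) := by simp [c]
  rw [c0, c1] at he
  simp only [Prod.mk_sub_mk] at he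
  rw [Prod.mk.eta, he, dotProduct_sub, dotProduct_sub]
  ring

/-- **Theorem 1, ℓ_{i2}-gain analysis.**  If there exist `P ≻ 0` and
`γ > 0` such that the block matrix
`[[P, A_δ P, B_δ, 0], [P A_δᵀ, P, 0, P C_δᵀ], [B_δᵀ, 0, γI, D_δᵀ], [0, C_δ P, D_δ, γI]]`
is positive definite at every `(x,w) ∈ X × W` (with `A_δ, B_δ, C_δ, D_δ` the
Jacobians of `f` and `h`), then the system `x⁺ = f(x,w)`, `z = h(x,w)` has
incremental ℓ₂-gain bounded by `γ`, with offset
`ζ(a,b) = sqrt(γ (a−b)ᵀ P⁻¹ (a−b))` (which is nonnegative and vanishes for `a = b`). -/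
theorem li2_gain_analysis
    (n m p : ℕ)
    (X : Set (Fin n → ℝ)) (W : Set (Fin m → ℝ))
    (hXopen : IsOpen X) (hXconv : Convex ℝ X)
    (hWopen : IsOpen W) (hWconv : Convex ℝ W)
    (f : (Fin n → ℝ) × (Fin m → ℝ) → (Fin n → ℝ))
    (h : (Fin n → ℝ) × (Fin m → ℝ) → (Fin p → ℝ))
    (hf : ContDiffOn ℝ 1 f (X ×ˢ W)) (hh : ContDiffOn ℝ 1 h (X ×ˢ W))
    (hfmaps : ∀ x ∈ X, ∀ w ∈ W, f (x, w) ∈ X)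
    (P : Matrix (Fin n) (Fin n) ℝ) (hP : P.PosDef)
    (γ : ℝ) (hγ : 0 < γ)
    -- the Jacobian matrices  A_δ = ∂f/∂x, B_δ = ∂f/∂w, C_δ = ∂h/∂x, D_δ = ∂h/∂w
    (Aδ : (Fin n → ℝ) → (Fin m → ℝ) → Matrix (Fin n) (Fin n) ℝ)
    (Bδ : (Fin n → ℝ) → (Fin m → ℝ) → Matrix (Fin n) (Fin m) ℝ)
    (Cδ : (Fin n → ℝ) → (Fin m → ℝ) → Matrix (Fin p) (Fin n) ℝ)
    (Dδ : (Fin n → ℝ) → (Fin m → ℝ) → Matrix (Fin p) (Fin m) ℝ)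
    (hAδ : ∀ x w, Aδ x w = Matrix.of fun i j => fderiv ℝ f (x, w) (Pi.single j 1, 0) i)
    (hBδ : ∀ x w, Bδ x w = Matrix.of fun i j => fderiv ℝ f (x, w) (0, Pi.single j 1) i)
    (hCδ : ∀ x w, Cδ x w = Matrix.of fun i j => fderiv ℝ h (x, w) (Pi.single j 1, 0) i)
    (hDδ : ∀ x w, Dδ x w = Matrix.of fun i j => fderiv ℝ h (x, w) (0, Pi.single j 1) i)
    -- the matrix inequality (4)
    (hLMI : ∀ x ∈ X, ∀ w ∈ W,
      (Matrix.fromBlocks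
        (Matrix.fromBlocks P (Aδ x w * P) (P * (Aδ x w)ᵀ) P)
        (Matrix.fromBlocks (Bδ x w) 0 0 (P * (Cδ x w)ᵀ))
        (Matrix.fromBlocks (Bδ x w)ᵀ 0 0 (Cδ x w * P))
        (Matrix.fromBlocks (γ • (1 : Matrix (Fin m) (Fin m) ℝ)) (Dδ x w)ᵀ
          (Dδ x w) (γ • (1 : Matrix (Fin p) (Fin p) ℝ)))).PosDef) :
    -- conclusion: incremental ℓ₂-gain bound
    (∀ x xs : ℕ → Fin n → ℝ, ∀ w ws : ℕ → Fin m → ℝ, ∀ z zs : ℕ → Fin p → ℝ,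
      x 0 ∈ X → xs 0 ∈ X → (∀ k, w k ∈ W) → (∀ k, ws k ∈ W) →
      (∀ k, x (k + 1) = f (x k, w k)) → (∀ k, z k = h (x k, w k)) →
      (∀ k, xs (k + 1) = f (xs k, ws k)) → (∀ k, zs k = h (xs k, ws k)) →
      (Summable fun k => (w k - ws k) ⬝ᵥ (w k - ws k)) →
      (Summable fun k => (z k - zs k) ⬝ᵥ (z k - zs k)) ∧
        Real.sqrt (∑' k, (z k - zs k) ⬝ᵥ (z k - zs k)) ≤
          γ * Real.sqrt (∑' k, (w k - ws k) ⬝ᵥ (w k - ws k)) +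
            Real.sqrt (γ * ((x 0 - xs 0) ⬝ᵥ P⁻¹.mulVec (x 0 - xs 0)))) ∧
    -- the offset function ζ is nonnegative and vanishes on the diagonal
    (∀ a b : Fin n → ℝ,
      0 ≤ Real.sqrt (γ * ((a - b) ⬝ᵥ P⁻¹.mulVec (a - b)))) ∧
    (∀ a : Fin n → ℝ,
      Real.sqrt (γ * ((a - a) ⬝ᵥ P⁻¹.mulVec (a - a))) = 0) := by
  have hdet : IsUnit P.det := hP.det_pos.ne'.isUnit
  have hQ : ∀ y : Fin n → ℝ, 0 ≤ y ⬝ᵥ P⁻¹ *ᵥ y := fun y => by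
    simpa using hP.inv.posSemidef.dotProduct_mulVec_nonneg y
  refine ⟨?_, fun a b => Real.sqrt_nonneg _, fun a => by simp⟩
  intro x xs w ws z zs hx0 hxs0 hw hws hx hz hxs hzs hsum
  have hxX : ∀ k, x k ∈ X := by
    intro k
    induction k with
    | zero => exact hx0
    | succ k ih => rw [hx]; exact hfmaps _ ih _ (hw k)
  have hxsX : ∀ k, xs k ∈ X := by
    intro k
    induction k with
    | zero => exact hxs0
    | succ k ih => rw [hxs]; exact hfmaps _ ih _ (hws k)
  have hstep : ∀ k, (x (k+1) - xs (k+1)) ⬝ᵥ P⁻¹ *ᵥ (x (k+1) - xs (k+1))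
      + γ⁻¹ * ((z k - zs k) ⬝ᵥ (z k - zs k)) ≤
      (x k - xs k) ⬝ᵥ P⁻¹ *ᵥ (x k - xs k) + γ * ((w k - ws k) ⬝ᵥ (w k - ws k)) := by
    intro k
    set a := x (k+1) - xs (k+1) with ha
    set b := z k - zs k with hb
    obtain ⟨y, hy, r, hr, he⟩ := one_step X W hXopen hXconv hWopen hWconv f h hf hh
      (x k) (xs k) (w k) (ws k) (hxX k) (hxsX k) (hw k) (hws k) (P⁻¹ *ᵥ a) (γ⁻¹ • b)
    have hq := quad_form P _ _ _ _ γ hP (hLMI y hy r hr) (P⁻¹ *ᵥ a) (x k - xs k) (w k - ws k)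
      (γ⁻¹ • b)
    rw [hAδ, hBδ, hCδ, hDδ, jac_apply, jac_apply, ← he, ← hx, ← hxs, ← hz, ← hzs, ← ha, ← hb,
      Matrix.mulVec_mulVec, Matrix.mul_nonsing_inv _ hdet, Matrix.one_mulVec,
      dotProduct_comm (P⁻¹ *ᵥ a) a] at hq
    simp only [smul_dotProduct, dotProduct_smul, smul_eq_mul] at hq
    rw [mul_inv_cancel_left₀ hγ.ne'] at hq
    linarith
  have hdd : ∀ {q : ℕ} (y : Fin q → ℝ), 0 ≤ y ⬝ᵥ y := fun y =>
    Finset.sum_nonneg fun i _ => mul_self_nonneg _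
  have hpart : ∀ N, (x N - xs N) ⬝ᵥ P⁻¹ *ᵥ (x N - xs N)
      + γ⁻¹ * ∑ k ∈ Finset.range N, ((z k - zs k) ⬝ᵥ (z k - zs k)) ≤
      (x 0 - xs 0) ⬝ᵥ P⁻¹ *ᵥ (x 0 - xs 0)
        + γ * ∑ k ∈ Finset.range N, ((w k - ws k) ⬝ᵥ (w k - ws k)) := by
    intro N
    induction N with
    | zero => simp
    | succ N ih =>
      rw [Finset.sum_range_succ, Finset.sum_range_succ, mul_add, mul_add]
      linarith [hstep N]
  set S := ∑' k, (w k - ws k) ⬝ᵥ (w k - ws k) with hS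
  set V := (x 0 - xs 0) ⬝ᵥ P⁻¹ *ᵥ (x 0 - xs 0) with hV
  have hS0 : 0 ≤ S := tsum_nonneg fun k => hdd _
  have hV0 : 0 ≤ V := hQ _
  have hbound : ∀ N, ∑ k ∈ Finset.range N, ((z k - zs k) ⬝ᵥ (z k - zs k)) ≤
      γ * V + γ ^ 2 * S := by
    intro N
    have h1 := hpart N
    have h2 : ∑ k ∈ Finset.range N, ((w k - ws k) ⬝ᵥ (w k - ws k)) ≤ S :=
      hsum.sum_le_tsum _ fun k _ => hdd _
    have h3 : γ⁻¹ * ∑ k ∈ Finset.range N, ((z k - zs k) ⬝ᵥ (z k - zs k)) ≤ V + γ * S := by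
      have := mul_le_mul_of_nonneg_left h2 hγ.le
      linarith [hQ (x N - xs N)]
    rw [inv_mul_le_iff₀ hγ] at h3
    linarith
  refine ⟨summable_of_sum_range_le (fun k => hdd _) hbound, ?_⟩
  have hT := Real.tsum_le_of_sum_range_le (fun k => hdd _) hbound
  apply Real.sqrt_le_iff.2
  refine ⟨by positivity, hT.trans ?_⟩
  have e1 := Real.sq_sqrt hS0
  have e2 := Real.sq_sqrt (mul_nonneg hγ.le hV0)
  have e3 : 0 ≤ γ * √S * √(γ * V) := by positivity
  nlinarith
end

section
/- Incremental non-expansiveness under a common input: Let X ⊆ ℝ^n and W ⊆ ℝ^m be open convex sets, let f : X × W → X be C¹, let Q ∈ ℝ^{n×n} be symmetric positive definite, and suppose that for all (x, w) ∈ X × W and all δx ∈ ℝ^n: ((∂f/∂x)(x,w) δx)ᵀ Q ((∂f/∂x)(x,w) δx) ≤ δxᵀ Q δx. Then for any two trajectories x, x* of x_{k+1} = f(x_k, w̄_k) driven by the same input sequence w̄ with w̄_k ∈ W and x₀, x₀* ∈ X, the weighted distance is non-increasing from its initial value: (x_k − x*_k)ᵀ Q (x_k − x*_k) ≤ (x₀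 − x₀*)ᵀ Q (x₀ − x₀*) for all k ∈ ℕ. -/
open Matrix Set

theorem step_aux
    (n m : ℕ)
    (X : Set (Fin n → ℝ)) (W : Set (Fin m → ℝ))
    (hXopen : IsOpen X) (hXconv : Convex ℝ X) (hWopen : IsOpen W)
    (f : (Fin n → ℝ) × (Fin m → ℝ) → (Fin n → ℝ))
    (hf : ContDiffOn ℝ 1 f (X ×ˢ W))
    (Q : Matrix (Fin n) (Fin n) ℝ) (hQ : Q.PosDef)
    (hcontr : ∀ x ∈ X, ∀ w ∈ W, ∀ δx : Fin n → ℝ,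
      (fderiv ℝ f (x, w) (δx, 0)) ⬝ᵥ Q.mulVec (fderiv ℝ f (x, w) (δx, 0)) ≤
        δx ⬝ᵥ Q.mulVec δx)
    (a b : Fin n → ℝ) (w : Fin m → ℝ) (ha : a ∈ X) (hb : b ∈ X) (hw : w ∈ W) :
    (f (a, w) - f (b, w)) ⬝ᵥ Q.mulVec (f (a, w) - f (b, w)) ≤
      (a - b) ⬝ᵥ Q.mulVec (a - b) := by
  obtain ⟨e, he⟩ : ∃ e, e = f (a, w) - f (b, w) := ⟨_, rfl⟩
  let L0 : (Fin n → ℝ) →ₗ[ℝ] ℝ :=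
    { toFun := fun y => e ⬝ᵥ Q.mulVec y
      map_add' := fun y z => by rw [mulVec_add, dotProduct_add]
      map_smul' := fun c y => by rw [mulVec_smul, dotProduct_smul]; rfl }
  let L : (Fin n → ℝ) →L[ℝ] ℝ := LinearMap.toContinuousLinearMap L0
  have hL : ∀ y, L y = e ⬝ᵥ Q.mulVec y := fun y => rfl
  have hmem : ∀ t ∈ Icc (0:ℝ) 1, b + t • (a - b) ∈ X := fun t ht =>
    hXconv.add_smul_sub_mem hb ha ht
  have hder : ∀ t ∈ Icc (0:ℝ) 1, HasDerivAt (fun t : ℝ => L (f (b + t • (a - b), w)))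
      (L (fderiv ℝ f (b + t • (a - b), w) (a - b, 0))) t := by
    intro t ht
    have hd : DifferentiableAt ℝ f (b + t • (a - b), w) :=
      (hf.differentiableOn (by norm_num)).differentiableAt
        ((hXopen.prod hWopen).mem_nhds ⟨hmem t ht, hw⟩)
    have h1 : HasDerivAt (fun t : ℝ => b + t • (a - b)) (a - b) t := by
      simpa using ((hasDerivAt_id t).smul_const (a - b)).const_add b
    have h2 : HasDerivAt (fun t : ℝ => (b + t • (a - b), w)) (a - b, 0) t :=
      h1.prodMk (hasDerivAt_const t w)
    exact L.hasFDerivAt.comp_hasDerivAt t (hd.hasFDerivAt.comp_hasDerivAt t h2)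
  obtain ⟨t, ht, hteq⟩ := exists_hasDerivAt_eq_slope _ _ (zero_lt_one' ℝ)
    (fun t ht => (hder t ht).continuousAt.continuousWithinAt)
    (fun t ht => hder t (Ioo_subset_Icc_self ht))
  have hc := hcontr _ (hmem t (Ioo_subset_Icc_self ht)) w hw (a - b)
  generalize fderiv ℝ f (b + t • (a - b), w) (a - b, 0) = v at hteq hc
  have hev : e ⬝ᵥ Q.mulVec v = e ⬝ᵥ Q.mulVec e := by
    rw [← hL, ← hL, hteq, ← map_sub]
    simp [he]
  have hsym : v ⬝ᵥ Q.mulVec e = e ⬝ᵥ Q.mulVec v := by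
    have hT : Qᵀ = Q := by simpa using hQ.isHermitian.eq
    rw [dotProduct_mulVec, ← mulVec_transpose, hT, dotProduct_comm]
  have hpos : 0 ≤ (e - v) ⬝ᵥ Q.mulVec (e - v) := by
    simpa using hQ.posSemidef.dotProduct_mulVec_nonneg (e - v)
  rw [mulVec_sub, dotProduct_sub, sub_dotProduct, sub_dotProduct] at hpos
  rw [← he]
  linarith

/-- Incremental non-expansiveness under a common input: if the
state Jacobian of `f` is a `Q`-contraction (non-expansion) at every
`(x, w) ∈ X × W`, then for any two trajectories of `x_{k+1} = f(x_k, w̄_k)`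
driven by the same input sequence, the weighted squared distance
`(x_k − x*_k)ᵀ Q (x_k − x*_k)` never exceeds its initial value. -/
theorem incremental_nonexpansive_common_input
    (n m : ℕ)
    (X : Set (Fin n → ℝ)) (W : Set (Fin m → ℝ))
    (hXopen : IsOpen X) (hXconv : Convex ℝ X)
    (hWopen : IsOpen W) (hWconv : Convex ℝ W)
    (f : (Fin n → ℝ) × (Fin m → ℝ) → (Fin n → ℝ))
    (hf : ContDiffOn ℝ 1 f (X ×ˢ W))
    (hfmaps : ∀ x ∈ X, ∀ w ∈ W, f (x, w) ∈ X)
    (Q : Matrix (Fin n) (Fin n) ℝ) (hQ : Q.PosDef)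
    -- pointwise non-expansiveness of the differential dynamics
    (hcontr : ∀ x ∈ X, ∀ w ∈ W, ∀ δx : Fin n → ℝ,
      (fderiv ℝ f (x, w) (δx, 0)) ⬝ᵥ Q.mulVec (fderiv ℝ f (x, w) (δx, 0)) ≤
        δx ⬝ᵥ Q.mulVec δx)
    -- two trajectories with a common input sequence
    (wbar : ℕ → Fin m → ℝ) (hwbar : ∀ k, wbar k ∈ W)
    (x xs : ℕ → Fin n → ℝ)
    (hx0 : x 0 ∈ X) (hxs0 : xs 0 ∈ X)
    (hxS : ∀ k, x (k + 1) = f (x k, wbar k))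
    (hxsS : ∀ k, xs (k + 1) = f (xs k, wbar k)) :
    ∀ k : ℕ,
      (x k - xs k) ⬝ᵥ Q.mulVec (x k - xs k) ≤
        (x 0 - xs 0) ⬝ᵥ Q.mulVec (x 0 - xs 0) := by
  have hX : ∀ k, x k ∈ X ∧ xs k ∈ X := by
    intro k
    induction k with
    | zero => exact ⟨hx0, hxs0⟩
    | succ k ih =>
      rw [hxS, hxsS]
      exact ⟨hfmaps _ ih.1 _ (hwbar k), hfmaps _ ih.2 _ (hwbar k)⟩
  intro k
  induction k with
  | zero => exact le_rfl
  | succ k ih =>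
    refine le_trans ?_ ih
    rw [hxS, hxsS]
    exact step_aux n m X W hXopen hXconv hWopen f hf Q hQ hcontr _ _ _
      (hX k).1 (hX k).2 (hwbar k)
end
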